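/- With the Chevalley data below over a field K of characteristic zero, let M be a Lie module over L, let a ∈ ℕ, and let w ∈ M satisfy x_{−γ} • w = 0 for every γ ∈ Φ⁺ with c_{α₁}(γ) = 0. Set v = x_{−α₁}^{a+1} • w (the (a+1)-fold action of x_{−α₁} on w), and let U be the K-span of all vectors x_{−γ_1} • (x_{−γ_2} • (⋯ • (x_{−γ_s} • v)⋯)) with s ≥ 0 and γ_1, …, γ_s ∈ Φ⁺ each having c_{α₁}(γ_i) = 1. Then for every β ∈ Φ⁺ and every u ∈ U, one has x_{−α₁} • (x_{−β} • u) ∈ U. -/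

import Mathlib

/-!
Write `e = x_{-β}`, `f = x_{-α₁}` and `𝔫` for the span of the `x_{-γ}` with `c_{α₁}(γ) = 1`.
Since no root has `α₁`-coefficient `2`, `𝔫` is abelian, so `U = U(𝔫)v` is stable under `𝔫`; this
settles the case `c_{α₁}(β) = 1`. If `c_{α₁}(β) = 0`, then `ad e` preserves `𝔫`. Commuting `e` past
a monomial in `𝔫` only produces further elements of `U`, and `f` commutes with `𝔫`, so everything
reduces to `f e v ∈ U`. Now `e w = 0` and `[e, f] ∈ 𝔫` commutes with `f`, whence
`e f^{a+1} w = (a+1) [e, f] f^a w` and `f e v = (a+1) [e, f] f^{a+1} w = (a+1) [e, f] v ∈ U`.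

`lie_lie_mem_of_abelian` is this computation, for an abstract commuting family `y` in place of the
`x_{-γ}`; `BasedRootSystem.lie_neg_neg` supplies its hypotheses from the root system.
-/

/-- A finite reduced crystallographic root system together with a base (set of
simple roots) `Δ`, in a vector space `V` over a field `F` of characteristic zero.
For a root `α`, `coroot α` is the linear functional `⟨·, α∨⟩`; `reflect α` below
is the reflection `s_α`. -/
structure BasedRootSystem (F : Type*) [Field F] [CharZero F]
    (V : Type*) [AddCommGroup V] [Module F V] where
  /-- the set of roots -/
  Φ : Set V
  finite : Φ.Finite
  zero_not_mem : (0 : V) ∉ Φ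
  /-- `coroot α` is the linear functional `⟨·, α∨⟩` (relevant for `α ∈ Φ`) -/
  coroot : V → (V →ₗ[F] F)
  coroot_self : ∀ α ∈ Φ, coroot α α = 2
  reflect_mem : ∀ α ∈ Φ, ∀ β ∈ Φ, β - coroot α β • α ∈ Φ
  crystallographic : ∀ α ∈ Φ, ∀ β ∈ Φ, ∃ n : ℤ, coroot α β = (n : F)
  neg_mem : ∀ α ∈ Φ, -α ∈ Φ
  reduced : ∀ α ∈ Φ, ∀ t : F, t • α ∈ Φ → t = 1 ∨ t = -1
  /-- the base (set of simple roots) -/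
  Δ : Finset V
  Δ_subset : ∀ δ ∈ Δ, δ ∈ Φ
  Δ_linearIndependent : LinearIndependent F (fun δ : {v : V // v ∈ Δ} => (δ : V))
  /-- every root is an `ℕ`-linear combination of the simple roots, or the negative
  of such a combination -/
  decomp : ∀ α ∈ Φ, (∃ c : V → ℕ, α = ∑ δ ∈ Δ, (c δ : F) • δ) ∨
    (∃ c : V → ℕ, α = -∑ δ ∈ Δ, (c δ : F) • δ)
  /-- distinct simple roots of a base have nonpositive pairing -/
  simple_pair_nonpos : ∀ α ∈ Δ, ∀ β ∈ Δ, α ≠ β → ∃ n : ℤ, n ≤ 0 ∧ coroot β α = (n : F)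

namespace BasedRootSystem

variable {F : Type*} [Field F] [CharZero F] {V : Type*} [AddCommGroup V] [Module F V]

/-- The reflection `s_α : x ↦ x − ⟨x, α∨⟩ α`. -/
def reflect (B : BasedRootSystem F V) (α x : V) : V := x - B.coroot α x • α

/-- `Φ` is simply laced: `⟨α, β∨⟩ ∈ {−1, 0, 1}` for all roots `α ≠ ±β`. -/
def IsSimplyLaced (B : BasedRootSystem F V) : Prop :=
  ∀ α ∈ B.Φ, ∀ β ∈ B.Φ, α ≠ β → α ≠ -β →
    B.coroot β α = -1 ∨ B.coroot β α = 0 ∨ B.coroot β α = 1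

/-- Distinct simple roots `α, β` are adjacent if `⟨α, β∨⟩ ≠ 0`. -/
def Adj (B : BasedRootSystem F V) (α β : V) : Prop := α ≠ β ∧ B.coroot β α ≠ 0

/-- `a` and `b` are joined by a path within `S` consisting of consecutively
adjacent elements. -/
def JoinedIn (B : BasedRootSystem F V) (S : Set V) (a b : V) : Prop :=
  Relation.ReflTransGen (fun u w => u ∈ S ∧ w ∈ S ∧ B.Adj u w) a b

/-- A subset is connected if any two of its elements are joined by a path within it. -/
def IsConnectedSubset (B : BasedRootSystem F V) (S : Set V) : Prop :=
  ∀ a ∈ S, ∀ b ∈ S, B.JoinedIn S a b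

/-- The connected component of `a` in `S`. -/
def component (B : BasedRootSystem F V) (S : Set V) (a : V) : Set V :=
  {b ∈ S | B.JoinedIn S a b}

end BasedRootSystem

namespace BasedRootSystem

variable {F : Type*} [Field F] [CharZero F] {V : Type*} [AddCommGroup V] [Module F V]

/-- The positive system `Φ⁺` determined by the base: the roots which are
`ℕ`-linear combinations of the simple roots. -/
def Pos (B : BasedRootSystem F V) : Set V :=
  {α | α ∈ B.Φ ∧ ∃ c : V → ℕ, α = ∑ δ ∈ B.Δ, (c δ : F) • δ}

end BasedRootSystem

section Abstract

variable {K : Type*} [Field K] {L : Type*} [LieRing L] [LieAlgebra K L]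
  {M : Type*} [AddCommGroup M] [Module K M] [LieRingModule L M] [LieModule K L M]
  {ι : Type*}

/-- The span of all `y γ₁ • (⋯ • (y γₛ • v))` with `γᵢ ∈ S`; when the `y γ` with `γ ∈ S` span a
Lie subalgebra `𝔫`, this is `U(𝔫)v`. -/
def monomialSpan (K : Type*) [Field K] {L : Type*} [LieRing L]
    {M : Type*} [AddCommGroup M] [Module K M] [LieRingModule L M] {ι : Type*}
    (S : ι → Prop) (y : ι → L) (v : M) : Submodule K M :=
  Submodule.span K {m : M | ∃ l : List ι, (∀ γ ∈ l, S γ) ∧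
    m = l.foldr (fun γ m' => ⁅y γ, m'⁆) v}

lemma lie_mem_monomialSpan {S : ι → Prop} {y : ι → L} {v : M} {γ : ι} (hγ : S γ) {u : M}
    (hu : u ∈ monomialSpan K S y v) : ⁅y γ, u⁆ ∈ monomialSpan K S y v := by
  induction hu using Submodule.span_induction with
  | mem m hm =>
    obtain ⟨l, hl, rfl⟩ := hm
    refine Submodule.subset_span ⟨γ :: l, ?_, rfl⟩
    intro δ hδ
    rcases List.mem_cons.1 hδ with rfl | hδ
    · exact hγ
    · exact hl δ hδ
  | zero => simp
  | add m n _ _ hm hn => rw [lie_add]; exact add_mem hm hn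
  | smul t m _ hm => rw [lie_smul]; exact Submodule.smul_mem _ _ hm

lemma lie_mem_monomialSpan_of_mem_span {S : ι → Prop} {y : ι → L} {v : M} {z : L}
    (hz : z ∈ Submodule.span K (y '' {γ | S γ})) {u : M}
    (hu : u ∈ monomialSpan K S y v) : ⁅z, u⁆ ∈ monomialSpan K S y v := by
  induction hz using Submodule.span_induction with
  | mem z hz =>
    obtain ⟨γ, hγ, rfl⟩ := hz
    exact lie_mem_monomialSpan hγ hu
  | zero => simp
  | add m n _ _ hm hn => rw [add_lie]; exact add_mem hm hn
  | smul t m _ hm => rw [smul_lie]; exact Submodule.smul_mem _ _ hm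

/-- `e fⁿ⁺¹ w = (n+1) [e, f] fⁿ w`, provided `e w = 0` and `[e, f]` commutes with `f`. -/
lemma lie_iterate_succ {e f : L} (hef : ⁅f, ⁅e, f⁆⁆ = 0) {w : M} (hw : ⁅e, w⁆ = 0) (n : ℕ) :
    ⁅e, (fun m : M => ⁅f, m⁆)^[n + 1] w⁆ = (n + 1) • ⁅⁅e, f⁆, (fun m : M => ⁅f, m⁆)^[n] w⁆ := by
  have comm (m : M) : ⁅f, ⁅⁅e, f⁆, m⁆⁆ = ⁅⁅e, f⁆, ⁅f, m⁆⁆ := by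
    rw [leibniz_lie, hef, zero_lie, zero_add]
  induction n with
  | zero =>
    rw [zero_add, Function.iterate_one, Function.iterate_zero_apply, one_nsmul, leibniz_lie, hw,
      lie_zero, add_zero]
  | succ n ih =>
    rw [Function.iterate_succ_apply', leibniz_lie, ih, lie_nsmul, comm,
      ← Function.iterate_succ_apply' (fun m : M => ⁅f, m⁆) n w, succ_nsmul' _ (n + 1)]

/-- If the `y γ` with `γ ∈ S` commute, `ad e` preserves their span and `e w = 0`, then
`y γ₀ • e` preserves `monomialSpan K S y v` for `v = (y γ₀)ᵃ⁺¹ w`. -/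
lemma lie_lie_mem_of_abelian {S : ι → Prop} {y : ι → L}
    (hab : ∀ γ δ, S γ → S δ → ⁅y γ, y δ⁆ = 0) {γ₀ : ι} (hγ₀ : S γ₀) {e : L}
    (he : ∀ γ, S γ → ⁅e, y γ⁆ ∈ Submodule.span K (y '' {γ | S γ}))
    {w : M} (hw : ⁅e, w⁆ = 0) (a : ℕ) {u : M}
    (hu : u ∈ monomialSpan K S y ((fun m => ⁅y γ₀, m⁆)^[a + 1] w)) :
    ⁅y γ₀, ⁅e, u⁆⁆ ∈ monomialSpan K S y ((fun m => ⁅y γ₀, m⁆)^[a + 1] w) := by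
  have hcomm : ∀ z ∈ Submodule.span K (y '' {γ | S γ}), ⁅y γ₀, z⁆ = 0 := by
    intro z hz
    induction hz using Submodule.span_induction with
    | mem z hz => obtain ⟨γ, hγ, rfl⟩ := hz; exact hab _ _ hγ₀ hγ
    | zero => simp
    | add m n _ _ hm hn => rw [lie_add, hm, hn, add_zero]
    | smul t m _ hm => rw [lie_smul, hm, smul_zero]
  have hv : (fun m => ⁅y γ₀, m⁆)^[a + 1] w ∈
      monomialSpan K S y ((fun m => ⁅y γ₀, m⁆)^[a + 1] w) :=
    Submodule.subset_span ⟨[], by simp, rfl⟩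
  induction hu using Submodule.span_induction with
  | mem m hm =>
    obtain ⟨l, hl, rfl⟩ := hm
    induction l with
    | nil =>
      have hef := hcomm _ (he γ₀ hγ₀)
      rw [List.foldr_nil, lie_iterate_succ hef hw, lie_nsmul, leibniz_lie, hef, zero_lie,
        zero_add, ← Function.iterate_succ_apply' (fun m : M => ⁅y γ₀, m⁆) a w]
      exact nsmul_mem (lie_mem_monomialSpan_of_mem_span (he γ₀ hγ₀) hv) _
    | cons γ l ih =>
      have hγ : S γ := hl γ (by simp)
      have hl' : ∀ δ ∈ l, S δ := fun δ hδ => hl δ (by simp [hδ])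
      rw [List.foldr_cons, leibniz_lie e, lie_add, leibniz_lie (y γ₀) (y γ), hab _ _ hγ₀ hγ,
        zero_lie, zero_add]
      refine add_mem (lie_mem_monomialSpan hγ₀
        (lie_mem_monomialSpan_of_mem_span (he γ hγ) ?_)) (lie_mem_monomialSpan hγ (ih hl'))
      exact Submodule.subset_span ⟨l, hl', rfl⟩
  | zero => simp
  | add m n _ _ hm hn => rw [lie_add, lie_add]; exact add_mem hm hn
  | smul t m _ hm => rw [lie_smul, lie_smul]; exact Submodule.smul_mem _ _ hm

end Abstract

namespace BasedRootSystem

variable {F : Type*} [Field F] [CharZero F] {V : Type*} [AddCommGroup V] [Module F V]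

lemma coeff_unique (B : BasedRootSystem F V) {m n : V → ℕ}
    (hmn : ∑ δ ∈ B.Δ, (m δ : F) • δ = ∑ δ ∈ B.Δ, (n δ : F) • δ) {δ : V} (hδ : δ ∈ B.Δ) :
    m δ = n δ := by
  have key := linearIndependent_iff'.1 B.Δ_linearIndependent Finset.univ
    (fun δ => (m δ : F) - (n δ : F)) ?_ ⟨δ, hδ⟩ (Finset.mem_univ _)
  · exact_mod_cast sub_eq_zero.1 key
  · rw [Finset.univ_eq_attach, Finset.sum_attach B.Δ (fun δ => ((m δ : F) - (n δ : F)) • δ)]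
    simp only [sub_smul, Finset.sum_sub_distrib, hmn, sub_self]

lemma simple_mem_pos (B : BasedRootSystem F V) {α : V} (hα : α ∈ B.Δ) : α ∈ B.Pos := by
  classical
  refine ⟨B.Δ_subset α hα, fun δ => if δ = α then 1 else 0, ?_⟩
  simp [ite_smul, hα]

lemma coeff_simple (B : BasedRootSystem F V) {c : V → V → ℕ}
    (hc : ∀ β ∈ B.Pos, β = ∑ δ ∈ B.Δ, (c δ β : F) • δ) {α : V} (hα : α ∈ B.Δ) :
    c α α = 1 := by
  classical
  have h1 := B.coeff_unique (m := fun δ => c δ α) (n := fun δ => if δ = α then 1 else 0)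
    (by rw [← hc α (B.simple_mem_pos hα)]; simp [ite_smul, hα]) hα
  simpa using h1

lemma add_eq_sum (B : BasedRootSystem F V) {c : V → V → ℕ}
    (hc : ∀ β ∈ B.Pos, β = ∑ δ ∈ B.Δ, (c δ β : F) • δ) {β γ : V}
    (hβ : β ∈ B.Pos) (hγ : γ ∈ B.Pos) :
    β + γ = ∑ δ ∈ B.Δ, ((c δ β + c δ γ : ℕ) : F) • δ := by
  conv_lhs => rw [hc β hβ, hc γ hγ]
  simp only [Nat.cast_add, add_smul, Finset.sum_add_distrib]

/-- For positive roots `β`, `γ` with `c_α(γ) = 1`, either `[x_{-β}, x_{-γ}] = 0`, or `β + γ` is a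
positive root, with `α`-coefficient `c_α(β) + 1`, and the bracket is a multiple of
`x_{-(β+γ)}`. -/
lemma lie_neg_neg (B : BasedRootSystem F V) {c : V → V → ℕ}
    (hc : ∀ β ∈ B.Pos, β = ∑ δ ∈ B.Δ, (c δ β : F) • δ)
    {L : Type*} [LieRing L] {x : V → L} {C : V → V → ℤ}
    (hxx_mem : ∀ α ∈ B.Φ, ∀ β ∈ B.Φ, α + β ≠ 0 → α + β ∈ B.Φ →
      ⁅x α, x β⁆ = C α β • x (α + β))
    (hxx_nmem : ∀ α ∈ B.Φ, ∀ β ∈ B.Φ, α + β ≠ 0 → α + β ∉ B.Φ → ⁅x α, x β⁆ = 0)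
    {α : V} (hα : α ∈ B.Δ) {β γ : V} (hβ : β ∈ B.Pos) (hγ : γ ∈ B.Pos) (hγ1 : c α γ = 1) :
    ⁅x (-β), x (-γ)⁆ = 0 ∨ (β + γ ∈ B.Pos ∧ c α (β + γ) = c α β + 1 ∧
      ∃ n : ℤ, ⁅x (-β), x (-γ)⁆ = n • x (-(β + γ))) := by
  have hsum := B.add_eq_sum hc hβ hγ
  have hneg : -β + -γ = -(β + γ) := by abel
  have hne : -β + -γ ≠ 0 := by
    intro h0
    rw [hneg, neg_eq_zero, hsum] at h0
    have := B.coeff_unique (m := fun δ => c δ β + c δ γ) (n := fun _ => 0) (by simpa using h0) hα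
    simp [hγ1] at this
  have hβ' := B.neg_mem β hβ.1
  have hγ' := B.neg_mem γ hγ.1
  by_cases hmem : -β + -γ ∈ B.Φ
  · right
    have hpos : β + γ ∈ B.Pos := by
      refine ⟨?_, _, hsum⟩
      have := B.neg_mem _ hmem
      rwa [hneg, neg_neg] at this
    refine ⟨hpos, ?_, C (-β) (-γ), ?_⟩
    · have := B.coeff_unique (m := fun δ => c δ (β + γ)) (n := fun δ => c δ β + c δ γ)
        (by rw [← hc _ hpos, ← hsum]) hα
      simpa [hγ1] using this
    · rw [hxx_mem _ hβ' _ hγ' hne hmem, hneg]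
  · exact Or.inl (hxx_nmem _ hβ' _ hγ' hne hmem)

end BasedRootSystem

/-- Let `w` be a vector killed by `x_{−γ}` for every positive root `γ` with
`c_{α₁}(γ) = 0`, let `v = x_{−α₁}^{a+1} • w`, and let `U` be the span of all
`x_{−γ₁} • (⋯ • (x_{−γ_s} • v))` with each `γ_i ∈ Φ⁺` of `α₁`-coefficient `1`.
Then `x_{−α₁} • (x_{−β} • U) ⊆ U` for every positive root `β`. -/
theorem statement13 {F : Type*} [Field F] [CharZero F] {V : Type*} [AddCommGroup V]
    [Module F V] (B : BasedRootSystem F V)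
    (c : V → V → ℕ)
    (hc : ∀ β ∈ B.Pos, β = ∑ δ ∈ B.Δ, (c δ β : F) • δ)
    {K : Type*} [Field K] [CharZero K] {L : Type*} [LieRing L] [LieAlgebra K L]
    (x : V → L) (h : V → L) (C : V → V → ℤ)
    (hhh : ∀ δ ∈ B.Δ, ∀ δ' ∈ B.Δ, ⁅h δ, h δ'⁆ = 0)
    (hhx : ∀ δ ∈ B.Δ, ∀ α ∈ B.Φ, ∀ n : ℤ, B.coroot δ α = (n : F) → ⁅h δ, x α⁆ = n • x α)
    (hxx_mem : ∀ α ∈ B.Φ, ∀ β ∈ B.Φ, α + β ≠ 0 → α + β ∈ B.Φ →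
      ⁅x α, x β⁆ = C α β • x (α + β))
    (hxx_nmem : ∀ α ∈ B.Φ, ∀ β ∈ B.Φ, α + β ≠ 0 → α + β ∉ B.Φ → ⁅x α, x β⁆ = 0)
    (hxnx : ∀ α ∈ B.Φ, ⁅x α, x (-α)⁆ ∈ Submodule.span K (h '' (B.Δ : Set V)))
    (α₁ : V) (hα₁ : α₁ ∈ B.Δ)
    (hcoeff : ∀ β ∈ B.Pos, c α₁ β = 0 ∨ c α₁ β = 1)
    {M : Type*} [AddCommGroup M] [Module K M] [LieRingModule L M] [LieModule K L M]
    (a : ℕ) (w : M)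
    (hw : ∀ γ ∈ B.Pos, c α₁ γ = 0 → ⁅x (-γ), w⁆ = 0) :
    ∀ β ∈ B.Pos,
      ∀ u ∈ Submodule.span K
          {m : M | ∃ l : List V, (∀ γ ∈ l, γ ∈ B.Pos ∧ c α₁ γ = 1) ∧
            m = l.foldr (fun γ m' => ⁅x (-γ), m'⁆)
              ((fun m' => ⁅x (-α₁), m'⁆)^[a + 1] w)},
        ⁅x (-α₁), ⁅x (-β), u⁆⁆ ∈ Submodule.span K
          {m : M | ∃ l : List V, (∀ γ ∈ l, γ ∈ B.Pos ∧ c α₁ γ = 1) ∧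
            m = l.foldr (fun γ m' => ⁅x (-γ), m'⁆)
              ((fun m' => ⁅x (-α₁), m'⁆)^[a + 1] w)} := by
  intro β hβ u hu
  have hS₁ : α₁ ∈ B.Pos ∧ c α₁ α₁ = 1 := ⟨B.simple_mem_pos hα₁, B.coeff_simple hc hα₁⟩
  have hbr {β γ : V} (hβ : β ∈ B.Pos) (hγ : γ ∈ B.Pos) (hγ1 : c α₁ γ = 1) :=
    B.lie_neg_neg hc hxx_mem hxx_nmem hα₁ hβ hγ hγ1
  rcases hcoeff β hβ with h0 | h1
  · refine lie_lie_mem_of_abelian (K := K) (S := fun γ => γ ∈ B.Pos ∧ c α₁ γ = 1)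
      (y := fun γ => x (-γ)) ?_ hS₁ ?_ (hw β hβ h0) a hu
    · rintro γ δ ⟨hγ, hγ1⟩ ⟨hδ, hδ1⟩
      rcases hbr hγ hδ hδ1 with hz | ⟨hp, hcp, -⟩
      · exact hz
      · -- the root `γ + δ` would have `α₁`-coefficient `2`
        have := hcoeff _ hp
        omega
    · rintro γ ⟨hγ, hγ1⟩
      rcases hbr hβ hγ hγ1 with hz | ⟨hp, hcp, n, hn⟩
      · simp only [hz, Submodule.zero_mem]
      · simp only [hn]
        refine zsmul_mem (Submodule.subset_span ?_) n
        exact ⟨β + γ, ⟨hp, by rw [hcp, h0]⟩, rfl⟩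
  · have hstable {γ : V} (hγ : γ ∈ B.Pos ∧ c α₁ γ = 1) {m : M} := lie_mem_monomialSpan (K := K)
      (v := (fun m' => ⁅x (-α₁), m'⁆)^[a + 1] w) (u := m)
      (S := fun γ => γ ∈ B.Pos ∧ c α₁ γ = 1) (y := fun γ => x (-γ)) hγ
    exact hstable hS₁ (hstable ⟨hβ, h1⟩ hu)
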